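/- Let K be an algebraically closed field, Q a finite quiver, and α a dimension vector. The homogeneous elements of degree at most N^6 in I(Q,α) = K[Rep(Q,α)]^{GL(α)}, where N = Σ_{i∈Q_0} α_i, form a separating subset of I(Q,α); that is, β_sep(I(Q,α)) ≤ N^6. -/

import Mathlib

open MvPolynomial Matrix

/-- Coordinate functions of a representation of a quiver with arrows `Q1`,
tail/head maps `ta ha : Q1 → Q0` and dimension vector `α`. -/
def repCoords {K : Type} [Field K] {Q0 Q1 : Type} {ta ha : Q1 → Q0} {α : Q0 → ℕ}
    (v : (a : Q1) → Matrix (Fin (α (ha a))) (Fin (α (ta a))) K) :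
    ((a : Q1) × (Fin (α (ha a)) × Fin (α (ta a)))) → K :=
  fun p => v p.1 p.2.1 p.2.2

/-- The ring of quiver invariants `I(Q,α) = K[Rep(Q,α)]^{GL(α)}`. -/
noncomputable def quiverInvariants (K : Type) [Field K] {Q0 Q1 : Type}
    (ta ha : Q1 → Q0) (α : Q0 → ℕ) :
    Subalgebra K (MvPolynomial ((a : Q1) × (Fin (α (ha a)) × Fin (α (ta a)))) K) :=
  ⨅ (A : (i : Q0) → GeneralLinearGroup (Fin (α i)) K)
    (v : (a : Q1) → Matrix (Fin (α (ha a))) (Fin (α (ta a))) K),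
      AlgHom.equalizer
        (aeval (repCoords fun a => (A (ha a)).val * v a * ((A (ta a))⁻¹).val))
        (aeval (repCoords v))

/-- The ring of quiver semi-invariants `SI(Q,α) = K[Rep(Q,α)]^{SL(α)}`. -/
noncomputable def quiverSemiInvariants (K : Type) [Field K] {Q0 Q1 : Type}
    (ta ha : Q1 → Q0) (α : Q0 → ℕ) :
    Subalgebra K (MvPolynomial ((a : Q1) × (Fin (α (ha a)) × Fin (α (ta a)))) K) :=
  ⨅ (A : (i : Q0) → SpecialLinearGroup (Fin (α i)) K)
    (v : (a : Q1) → Matrix (Fin (α (ha a))) (Fin (α (ta a))) K),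
      AlgHom.equalizer
        (aeval (repCoords fun a => (A (ha a)).val * v a * ((A (ta a))⁻¹).val))
        (aeval (repCoords v))

/-- The weight space `SI(Q,α)_σ` of semi-invariants of weight `σ : Q0 → ℤ`:
those `f` with `A · f = (∏ i, det (A i) ^ σ i) • f`, i.e.
`f(A⁻¹ · v) = (∏ i, det (A i) ^ σ i) * f(v)` for all `A ∈ GL(α)`. -/
noncomputable def quiverSemiInvariantsOfWeight (K : Type) [Field K] {Q0 Q1 : Type}
    [Fintype Q0] (ta ha : Q1 → Q0) (α : Q0 → ℕ) (σ : Q0 → ℤ) :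
    Submodule K (MvPolynomial ((a : Q1) × (Fin (α (ha a)) × Fin (α (ta a)))) K) where
  carrier := { f | ∀ (A : (i : Q0) → GeneralLinearGroup (Fin (α i)) K)
      (v : (a : Q1) → Matrix (Fin (α (ha a))) (Fin (α (ta a))) K),
      aeval (repCoords fun a => ((A (ha a))⁻¹).val * v a * (A (ta a)).val) f
        = (∏ i : Q0, ((A i).val.det) ^ (σ i)) * aeval (repCoords v) f }
  add_mem' := by
    intro f g hf hg A v
    rw [map_add, map_add, hf A v, hg A v, mul_add]
  zero_mem' := by
    intro A v
    simp
  smul_mem' := by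
    intro c f hf A v
    rw [_root_.map_smul, _root_.map_smul, hf A v, smul_eq_mul, smul_eq_mul]
    ring

/-- `IsQuiverPath ta ha x y l` : the list of arrows `l` is a directed path from
vertex `x` to vertex `y`. -/
def IsQuiverPath {Q0 Q1 : Type} (ta ha : Q1 → Q0) (x y : Q0) : List Q1 → Prop
  | [] => x = y
  | a :: l =>
      ta a = x ∧ List.Chain' (fun b c => ha b = ta c) (a :: l) ∧
        ha ((a :: l).getLast (List.cons_ne_nil a l)) = y

/-- The number of directed paths from `x` to `y`. -/
noncomputable def numQuiverPaths {Q0 Q1 : Type} (ta ha : Q1 → Q0) (x y : Q0) : ℕ :=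
  Nat.card { l : List Q1 // IsQuiverPath ta ha x y l }

/-- A quiver has no oriented cycles if there is no nonempty directed path from a
vertex to itself. -/
def HasNoOrientedCycles {Q0 Q1 : Type} (ta ha : Q1 → Q0) : Prop :=
  ∀ (x : Q0) (l : List Q1), l ≠ [] → ¬ IsQuiverPath ta ha x x l

/-!
Invariants do not change when a representation is replaced by the associated graded of a
subrepresentation, because the latter is a limit of representations isomorphic to the former. After
finitely many such steps the representation becomes semisimple, and then, by Brauer–Nesbitt, it is
determined up to isomorphism by the characteristic polynomials of the elements of the free algebra
on the vertices and arrows, acting on the total space of dimension `N`. So the invariants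
`v ↦ det (x acting on v)` separate all that invariants can separate. For a given pair `(v, w)` the
element `x` matters only through its image in the product of two `N × N` matrix algebras, which has
dimension `2 * N ^ 2`, so words of length at most `2 * N ^ 2 - 1` suffice, and the determinant then
has degree at most `N * (2 * N ^ 2 - 1) ≤ N ^ 6`. Over an infinite field the homogeneous components
of an invariant are again invariants.
-/

section SemisimpleModules

theorem isSemisimpleModule_prod {F V W : Type*} [Ring F] [AddCommGroup V] [Module F V]
    [AddCommGroup W] [Module F W] [IsSemisimpleModule F V] [IsSemisimpleModule F W] :
    IsSemisimpleModule F (V × W) := by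
  have hsup : IsSemisimpleModule F
      (LinearMap.range (LinearMap.inl F V W) ⊔ LinearMap.range (LinearMap.inr F V W) :
        Submodule F (V × W)) :=
    (IsSemisimpleModule.range _).sup (IsSemisimpleModule.range _)
  rw [LinearMap.sup_range_inl_inr] at hsup
  exact IsSemisimpleModule.congr Submodule.topEquiv.symm

theorem exists_linearEquiv_submodule_of_linearMap_ne_zero {F V W : Type*} [Ring F]
    [AddCommGroup V] [Module F V] [AddCommGroup W] [Module F W] [IsSemisimpleModule F V]
    {f : V →ₗ[F] W} (hf : f ≠ 0) :
    ∃ (S : Submodule F V) (T : Submodule F W), S ≠ ⊥ ∧ T ≠ ⊥ ∧ Nonempty (S ≃ₗ[F] T) := by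
  obtain ⟨C, hC⟩ := exists_isCompl (LinearMap.ker f)
  refine ⟨C, LinearMap.range f, ?_, LinearMap.range_eq_bot.not.mpr hf,
    ⟨(Submodule.quotientEquivOfIsCompl _ C hC).symm ≪≫ₗ f.quotKerEquivRange⟩⟩
  rintro rfl
  exact hf (LinearMap.ker_eq_top.mp (eq_top_of_isCompl_bot hC))

theorem exists_smul_eq_self_and_smul_eq_zero {K F V W : Type*} [CommRing K] [Ring F]
    [Algebra K F] [AddCommGroup V] [Module K V] [Module F V] [IsScalarTower K F V]
    [AddCommGroup W] [Module K W] [Module F W] [IsScalarTower K F W]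
    [Module.Finite K V] [Module.Finite K W] [IsSemisimpleModule F V] [IsSemisimpleModule F W]
    (hVW : ∀ f : V →ₗ[F] W, f = 0) (hWV : ∀ f : W →ₗ[F] V, f = 0) :
    ∃ r : F, (∀ v : V, r • v = v) ∧ ∀ w : W, r • w = 0 := by
  have := isSemisimpleModule_prod (F := F) (V := V) (W := W)
  -- As `Hom(V, W) = Hom(W, V) = 0`, every endomorphism of `V × W` is block diagonal, so the
  -- projection to `V` lies in the bicommutant and the density theorem applies to it.
  have comm_fst : ∀ (g : Module.End F (V × W)) (p : V × W), (g p).1 = (g (p.1, 0)).1 := by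
    intro g p
    have : (g (0, p.2)).1 = 0 :=
      congr($(hWV (LinearMap.fst F V W ∘ₗ g ∘ₗ LinearMap.inr F V W)) p.2)
    rw [← add_zero (g (p.1, 0)).1, ← this, ← Prod.fst_add, ← map_add]
    simp
  have comm_snd : ∀ (g : Module.End F (V × W)) (v : V), (g (v, 0)).2 = 0 := fun g v ↦
    congr($(hVW (LinearMap.snd F V W ∘ₗ g ∘ₗ LinearMap.inl F V W)) v)
  let π : Module.End (Module.End F (V × W)) (V × W) :=
    { toFun p := (p.1, 0)
      map_add' p q := by simp
      map_smul' g p := by ext <;> simp [comm_fst g p, comm_snd g p.1] }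
  obtain ⟨s, hs⟩ := Module.Finite.fg_top (R := K) (M := V × W)
  obtain ⟨r, hr⟩ := jacobson_density π s
  have hπ : LinearMap.inl K V W ∘ₗ LinearMap.fst K V W = Algebra.lsmul K K (V × W) r :=
    LinearMap.ext_on hs hr
  exact ⟨r, fun v ↦ congr(($hπ (v, 0)).1).symm, fun w ↦ congr(($hπ (0, w)).2).symm⟩

end SemisimpleModules

section BrauerNesbitt

variable {K F V W : Type*} [Field K] [Ring F] [Algebra K F]
  [AddCommGroup V] [Module K V] [Module F V] [IsScalarTower K F V] [FiniteDimensional K V]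
  [AddCommGroup W] [Module K W] [Module F W] [IsScalarTower K F W] [FiniteDimensional K W]

instance finiteDimensional_submodule_of_isScalarTower (S : Submodule F V) :
    FiniteDimensional K S :=
  inferInstanceAs (FiniteDimensional K (S.restrictScalars K))

theorem charpoly_lsmul_congr (e : V ≃ₗ[F] W) (x : F) :
    (Algebra.lsmul K K V x).charpoly = (Algebra.lsmul K K W x).charpoly := by
  rw [← LinearEquiv.charpoly_conj (e.restrictScalars K) (Algebra.lsmul K K V x)]
  congr 1
  ext w
  simp [LinearEquiv.conj_apply]

theorem charpoly_lsmul_prod (x : F) :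
    (Algebra.lsmul K K (V × W) x).charpoly
      = (Algebra.lsmul K K V x).charpoly * (Algebra.lsmul K K W x).charpoly := by
  rw [← LinearMap.charpoly_prodMap]
  congr 1

theorem charpoly_lsmul_eq_mul_of_isCompl {S C : Submodule F V} (h : IsCompl S C) (x : F) :
    (Algebra.lsmul K K V x).charpoly
      = (Algebra.lsmul K K S x).charpoly * (Algebra.lsmul K K C x).charpoly := by
  rw [← charpoly_lsmul_prod, charpoly_lsmul_congr (Submodule.prodEquivOfIsCompl S C h)]

theorem finrank_eq_of_charpoly_lsmul_eq
    (h : ∀ x : F, (Algebra.lsmul K K V x).charpoly = (Algebra.lsmul K K W x).charpoly) :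
    Module.finrank K V = Module.finrank K W := by
  simpa only [LinearMap.charpoly_natDegree] using congr(Polynomial.natDegree $(h 0))

theorem exists_linearMap_ne_zero_of_charpoly_lsmul_eq [IsSemisimpleModule F V]
    [IsSemisimpleModule F W] [Nontrivial V]
    (h : ∀ x : F, (Algebra.lsmul K K V x).charpoly = (Algebra.lsmul K K W x).charpoly) :
    (∃ f : V →ₗ[F] W, f ≠ 0) ∨ ∃ f : W →ₗ[F] V, f ≠ 0 := by
  by_contra! hcon
  obtain ⟨r, hV, hW⟩ := exists_smul_eq_self_and_smul_eq_zero (K := K) hcon.1 hcon.2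
  have hr := h r
  rw [show Algebra.lsmul K K V r = 1 from LinearMap.ext hV,
    show Algebra.lsmul K K W r = 0 from LinearMap.ext hW,
    LinearMap.charpoly_one, LinearMap.charpoly_zero] at hr
  simpa [zero_pow Module.finrank_pos.ne'] using congr(Polynomial.eval 1 $hr)

theorem exists_common_submodule_of_charpoly_lsmul_eq [IsSemisimpleModule F V]
    [IsSemisimpleModule F W] [Nontrivial V]
    (h : ∀ x : F, (Algebra.lsmul K K V x).charpoly = (Algebra.lsmul K K W x).charpoly) :
    ∃ (S : Submodule F V) (T : Submodule F W), S ≠ ⊥ ∧ Nonempty (S ≃ₗ[F] T) := by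
  obtain ⟨f, hf⟩ | ⟨f, hf⟩ := exists_linearMap_ne_zero_of_charpoly_lsmul_eq h
  · obtain ⟨S, T, hS, -, he⟩ := exists_linearEquiv_submodule_of_linearMap_ne_zero hf
    exact ⟨S, T, hS, he⟩
  · obtain ⟨T, S, -, hS, ⟨e⟩⟩ := exists_linearEquiv_submodule_of_linearMap_ne_zero hf
    exact ⟨S, T, hS, ⟨e.symm⟩⟩

theorem finrank_lt_of_isCompl_of_ne_bot {S C : Submodule F V} (h : IsCompl S C) (hS : S ≠ ⊥) :
    Module.finrank K C < Module.finrank K V := by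
  refine Submodule.finrank_lt (s := C.restrictScalars K) fun hC ↦ hS ?_
  rw [Submodule.restrictScalars_eq_top_iff] at hC
  exact eq_bot_of_isCompl_top (hC ▸ h)

/- Brauer–Nesbitt: split off a common nonzero summand, cancel its characteristic polynomial and
recurse on the complements. -/
theorem nonempty_linearEquiv_of_charpoly_lsmul_eq [IsSemisimpleModule F V]
    [IsSemisimpleModule F W]
    (h : ∀ x : F, (Algebra.lsmul K K V x).charpoly = (Algebra.lsmul K K W x).charpoly) :
    Nonempty (V ≃ₗ[F] W) := by
  induction hd : Module.finrank K V using Nat.strong_induction_on generalizing V W with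
  | _ d ih =>
  subst hd
  rcases subsingleton_or_nontrivial V with hV | hV
  · have : Subsingleton W := by
      rw [← Module.finrank_zero_iff (R := K), ← finrank_eq_of_charpoly_lsmul_eq h]
      exact Module.finrank_zero_of_subsingleton
    exact ⟨⟨0, 0, fun _ ↦ Subsingleton.elim _ _, fun _ ↦ Subsingleton.elim _ _⟩⟩
  obtain ⟨S, T, hS, ⟨eST⟩⟩ := exists_common_submodule_of_charpoly_lsmul_eq h
  obtain ⟨S', hS'⟩ := exists_isCompl S
  obtain ⟨T', hT'⟩ := exists_isCompl T
  have h' (x : F) : (Algebra.lsmul K K S' x).charpoly = (Algebra.lsmul K K T' x).charpoly := by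
    have hx := h x
    rw [charpoly_lsmul_eq_mul_of_isCompl hS', charpoly_lsmul_eq_mul_of_isCompl hT',
      charpoly_lsmul_congr eST] at hx
    exact mul_left_cancel₀ (LinearMap.charpoly_monic _).ne_zero hx
  obtain ⟨eS'T'⟩ := ih _ (finrank_lt_of_isCompl_of_ne_bot hS' hS) h' rfl
  exact ⟨(Submodule.prodEquivOfIsCompl S S' hS').symm ≪≫ₗ eST.prodCongr eS'T' ≪≫ₗ
    Submodule.prodEquivOfIsCompl T T' hT'⟩

end BrauerNesbitt

section FreeAlgebra

variable {K Z : Type*}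

theorem mul_freeAlgebra_lift_eq_lift_mul [CommSemiring K] {A : Type*} [Semiring A] [Algebra K A]
    {f g : Z → A} {c : A} (h : ∀ z, c * f z = g z * c) (x : FreeAlgebra K Z) :
    c * FreeAlgebra.lift K f x = FreeAlgebra.lift K g x * c := by
  induction x using FreeAlgebra.induction with
  | grade0 r => simp only [AlgHom.commutes, Algebra.commutes]
  | grade1 z => simp only [FreeAlgebra.lift_ι_apply, h]
  | mul a b ha hb => rw [map_mul, map_mul, ← mul_assoc, ha, mul_assoc, hb, mul_assoc]
  | add a b ha hb => rw [map_add, map_add, mul_add, add_mul, ha, hb]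

theorem map_freeAlgebra_smul [CommSemiring K] {M N : Type*} [AddCommMonoid M] [Module K M]
    [Module (FreeAlgebra K Z) M] [IsScalarTower K (FreeAlgebra K Z) M] [AddCommMonoid N]
    [Module K N] [Module (FreeAlgebra K Z) N] [IsScalarTower K (FreeAlgebra K Z) N]
    (f : M →ₗ[K] N) (h : ∀ (z : Z) (m : M), f (FreeAlgebra.ι K z • m) = FreeAlgebra.ι K z • f m)
    (x : FreeAlgebra K Z) (m : M) : f (x • m) = x • f m := by
  induction x using FreeAlgebra.induction generalizing m with
  | grade0 r => simp only [algebraMap_smul, map_smul]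
  | grade1 z => exact h z m
  | mul a b ha hb => rw [mul_smul, ha, hb, mul_smul]
  | add a b ha hb => rw [add_smul, map_add, ha, hb, add_smul]

variable (K Z) in
/-- The span of the words of length at most one in the free algebra on `Z`. Its `n`-th power is the
span of the words of length at most `n`. -/
def freeAlgebraShortWords [CommSemiring K] : Submodule K (FreeAlgebra K Z) :=
  1 ⊔ Submodule.span K (Set.range (FreeAlgebra.ι K))

theorem one_le_freeAlgebraShortWords [CommSemiring K] : 1 ≤ freeAlgebraShortWords K Z :=
  le_sup_left

theorem exists_mem_freeAlgebraShortWords_pow [CommSemiring K] (x : FreeAlgebra K Z) :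
    ∃ n, x ∈ freeAlgebraShortWords K Z ^ n := by
  induction x using FreeAlgebra.induction with
  | grade0 r => exact ⟨0, by rw [pow_zero]; exact Submodule.algebraMap_mem r⟩
  | grade1 z =>
    refine ⟨1, ?_⟩
    rw [pow_one]
    exact Submodule.mem_sup_right (Submodule.subset_span ⟨z, rfl⟩)
  | mul a b ha hb =>
    obtain ⟨m, hm⟩ := ha
    obtain ⟨n, hn⟩ := hb
    exact ⟨m + n, by rw [pow_add]; exact Submodule.mul_mem_mul hm hn⟩
  | add a b ha hb =>
    obtain ⟨m, hm⟩ := ha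
    obtain ⟨n, hn⟩ := hb
    exact ⟨m + n, add_mem
      (pow_le_pow_right' one_le_freeAlgebraShortWords (Nat.le_add_right m n) hm)
      (pow_le_pow_right' one_le_freeAlgebraShortWords (Nat.le_add_left n m) hn)⟩

section FiniteDimensional

variable {B : Type*} [Field K] [Ring B] [Algebra K B] [FiniteDimensional K B]

theorem add_two_le_finrank_pow_succ_or_pow_succ_eq [Nontrivial B] {T : Submodule K B}
    (hT : 1 ≤ T) (n : ℕ) :
    n + 2 ≤ Module.finrank K (T ^ (n + 1) : Submodule K B) ∨ T ^ (n + 1) = T ^ n := by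
  have finrank_lt (n : ℕ) (hne : T ^ (n + 1) ≠ T ^ n) :
      Module.finrank K (T ^ n : Submodule K B)
        < Module.finrank K (T ^ (n + 1) : Submodule K B) :=
    Submodule.finrank_lt_finrank_of_lt
      ((pow_le_pow_right' hT n.le_succ).lt_of_ne hne.symm)
  rw [or_iff_not_imp_right]
  induction n with
  | zero =>
    intro hne
    have one_ne_bot : (T ^ 0 : Submodule K B) ≠ ⊥ :=
      (Submodule.ne_bot_iff _).mpr ⟨1, by rw [pow_zero]; exact Submodule.one_le.mp le_rfl,
        one_ne_zero⟩
    have := finrank_lt 0 hne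
    have := Submodule.one_le_finrank_iff.mpr one_ne_bot
    lia
  | succ n ih =>
    intro hne
    have hne' : T ^ (n + 1) ≠ T ^ n := fun h ↦ hne (by rw [pow_succ, h, ← pow_succ, h])
    have := ih hne'
    have := finrank_lt (n + 1) hne
    lia

theorem pow_le_pow_finrank_sub_one {T : Submodule K B} (hT : 1 ≤ T) (m : ℕ) :
    T ^ m ≤ T ^ (Module.finrank K B - 1) := by
  rcases subsingleton_or_nontrivial B with hB | hB
  · exact (Subsingleton.elim _ _).le
  set d := Module.finrank K B - 1
  have hd : d + 1 = Module.finrank K B := Nat.sub_add_cancel Module.finrank_pos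
  have stable : T ^ (d + 1) = T ^ d := by
    refine (add_two_le_finrank_pow_succ_or_pow_succ_eq hT d).resolve_left ?_
    have := Submodule.finrank_le (T ^ (d + 1))
    lia
  have stable_add (k : ℕ) : T ^ (d + k) = T ^ d := by
    induction k with
    | zero => rfl
    | succ k ih => rw [← add_assoc, pow_succ, ih, ← pow_succ, stable]
  exact (pow_le_pow_right' hT (Nat.le_add_left m d)).trans_eq (stable_add m)

theorem exists_mem_freeAlgebraShortWords_pow_finrank_sub_one (φ : FreeAlgebra K Z →ₐ[K] B)
    (x : FreeAlgebra K Z) :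
    ∃ y ∈ freeAlgebraShortWords K Z ^ (Module.finrank K B - 1), φ y = φ x := by
  obtain ⟨n, hn⟩ := exists_mem_freeAlgebraShortWords_pow x
  have one_le : 1 ≤ (freeAlgebraShortWords K Z).map φ.toLinearMap :=
    Submodule.one_le.mpr ⟨1, Submodule.one_le.mp one_le_freeAlgebraShortWords, map_one φ⟩
  have hle := pow_le_pow_finrank_sub_one one_le n
  rw [← Submodule.map_pow, ← Submodule.map_pow] at hle
  exact hle ⟨x, hn, rfl⟩

end FiniteDimensional

end FreeAlgebra

section PolynomialMatrices

variable {R σ n : Type*} [CommRing R] [Fintype n] [DecidableEq n]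

theorem totalDegree_det_le {A : Matrix n n (MvPolynomial σ R)} {d : ℕ}
    (hA : ∀ i j, (A i j).totalDegree ≤ d) : A.det.totalDegree ≤ Fintype.card n * d := by
  rw [Matrix.det_apply]
  refine totalDegree_finsetSum_le fun s _ ↦ (totalDegree_smul_le _ _).trans ?_
  calc (∏ i, A (s i) i).totalDegree ≤ ∑ i, (A (s i) i).totalDegree := totalDegree_finsetProd _ _
    _ ≤ ∑ _ : n, d := Finset.sum_le_sum fun i _ ↦ hA (s i) i
    _ = Fintype.card n * d := by simp

theorem totalDegree_freeAlgebra_lift_apply_le {Z : Type*}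
    {f : Z → Matrix n n (MvPolynomial σ R)} (hf : ∀ z i j, (f z i j).totalDegree ≤ 1) {k : ℕ}
    {x : FreeAlgebra R Z} (hx : x ∈ freeAlgebraShortWords R Z ^ k) (i j : n) :
    (FreeAlgebra.lift R f x i j).totalDegree ≤ k := by
  let entriesDegreeLE (k : ℕ) : Submodule R (FreeAlgebra R Z) :=
    ((restrictTotalDegree σ R k).matrix).comap (FreeAlgebra.lift R f).toLinearMap
  have mem_entriesDegreeLE {k : ℕ} {x : FreeAlgebra R Z} :
      x ∈ entriesDegreeLE k ↔ ∀ i j, (FreeAlgebra.lift R f x i j).totalDegree ≤ k := by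
    simp only [entriesDegreeLE, Submodule.mem_comap, ← mem_restrictTotalDegree]
    rfl
  have one_le (k : ℕ) : 1 ≤ entriesDegreeLE k := by
    refine Submodule.one_le.mpr (mem_entriesDegreeLE.mpr fun i j ↦ ?_)
    rw [map_one, Matrix.one_apply]
    split_ifs <;> simp
  have shortWords_le : freeAlgebraShortWords R Z ≤ entriesDegreeLE 1 := by
    refine sup_le (one_le 1) (Submodule.span_le.mpr ?_)
    rintro _ ⟨z, rfl⟩
    exact mem_entriesDegreeLE.mpr fun i j ↦ by rw [FreeAlgebra.lift_ι_apply]; exact hf z i j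
  have pow_le (k : ℕ) : freeAlgebraShortWords R Z ^ k ≤ entriesDegreeLE k := by
    induction k with
    | zero => rw [pow_zero]; exact one_le 0
    | succ k ih =>
      rw [pow_succ, Submodule.mul_le]
      refine fun x hx y hy ↦ mem_entriesDegreeLE.mpr fun i j ↦ ?_
      rw [map_mul, Matrix.mul_apply]
      exact totalDegree_finsetSum_le fun l _ ↦ (totalDegree_mul _ _).trans
        (add_le_add (mem_entriesDegreeLE.mp (ih hx) i l)
          (mem_entriesDegreeLE.mp (shortWords_le hy) l j))
  exact mem_entriesDegreeLE.mp (pow_le k hx) i j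

end PolynomialMatrices

section PolynomialEvaluation

variable {K σ : Type*}

theorem eval_aeval_polynomial [CommSemiring K] (x : σ → Polynomial K) (f : MvPolynomial σ K)
    (t : K) : (aeval x f).eval t = aeval (fun s ↦ (x s).eval t) f := by
  have : (Polynomial.aeval t).comp (aeval x) = aeval (fun s ↦ (x s).eval t) (R := K) := by
    ext s
    simp [Polynomial.coe_aeval_eq_eval]
  simpa [Polynomial.coe_aeval_eq_eval] using congr($this f)

theorem aeval_eq_of_forall_aeval_add_smul_eq [CommRing K] [IsDomain K] [Infinite K] {x y : σ → K}
    {f : MvPolynomial σ K} {c : K} (h : ∀ t : K, t ≠ 0 → aeval (x + t • y) f = c) :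
    aeval x f = c := by
  let P : Polynomial K := aeval (fun s ↦ Polynomial.C (x s) + Polynomial.C (y s) * Polynomial.X) f
  have eval_P (t : K) : P.eval t = aeval (x + t • y) f := by
    rw [eval_aeval_polynomial]
    congr 2
    ext s
    simp only [Polynomial.eval_add, Polynomial.eval_mul, Polynomial.eval_C, Polynomial.eval_X,
      Pi.add_apply, Pi.smul_apply, smul_eq_mul, mul_comm]
  have P_eq_C : P = Polynomial.C c :=
    Polynomial.eq_of_infinite_eval_eq _ _
      ((Set.finite_singleton (0 : K)).infinite_compl.mono fun t ht ↦
        ((eval_P t).trans (h t ht)).trans Polynomial.eval_C.symm)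
  simpa [P_eq_C] using (eval_P 0).symm

theorem aeval_smul_of_isHomogeneous [CommSemiring K] {A : Type*} [CommSemiring A] [Algebra K A]
    {g : MvPolynomial σ K} {d : ℕ} (hg : g.IsHomogeneous d) (t : A) (x : σ → A) :
    aeval (t • x) g = t ^ d * aeval x g := by
  rw [aeval_def, aeval_def, eval₂_eq, eval₂_eq, Finset.mul_sum]
  refine Finset.sum_congr rfl fun e he ↦ ?_
  have degree_e : ∑ i ∈ e.support, e i = d := by
    rw [← hg (mem_support_iff.mp he), ← Finsupp.degree_apply, Finsupp.degree_eq_weight_one]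
    rfl
  simp only [Pi.smul_apply, smul_eq_mul, mul_pow, Finset.prod_mul_distrib,
    Finset.prod_pow_eq_pow_sum, degree_e]
  ring

theorem coeff_aeval_X_smul_C [CommSemiring K] (x : σ → K) (f : MvPolynomial σ K) (d : ℕ) :
    (aeval ((Polynomial.X : Polynomial K) • (Polynomial.C ∘ x)) f).coeff d
      = aeval x (homogeneousComponent d f) := by
  have aeval_C (g : MvPolynomial σ K) :
      aeval (Polynomial.C ∘ x) g = Polynomial.C (aeval x g) :=
    aeval_algebraMap_apply (Polynomial K) x g
  conv_lhs => rw [← sum_homogeneousComponent f]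
  simp only [map_sum, aeval_smul_of_isHomogeneous (homogeneousComponent_isHomogeneous _ f),
    aeval_C, Polynomial.finsetSum_coeff, mul_comm (Polynomial.X ^ _),
    Polynomial.coeff_C_mul_X_pow, Finset.sum_ite_eq, Finset.mem_range]
  split_ifs with hd
  · rfl
  · rw [homogeneousComponent_eq_zero _ _ (by lia), map_zero]

theorem aeval_homogeneousComponent_eq_of_forall_aeval_smul_eq [CommRing K] [IsDomain K]
    [Infinite K] {x y : σ → K} {f : MvPolynomial σ K}
    (h : ∀ t : K, aeval (t • x) f = aeval (t • y) f) (d : ℕ) :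
    aeval x (homogeneousComponent d f) = aeval y (homogeneousComponent d f) := by
  rw [← coeff_aeval_X_smul_C, ← coeff_aeval_X_smul_C]
  congr 1
  refine Polynomial.funext fun t ↦ ?_
  have eval_X_smul_C (z : σ → K) :
      (fun s ↦ (((Polynomial.X : Polynomial K) • (Polynomial.C ∘ z)) s).eval t) = t • z := by
    ext s
    simp [mul_comm t]
  rw [eval_aeval_polynomial, eval_aeval_polynomial, eval_X_smul_C, eval_X_smul_C, h]

theorem exists_aeval_homogeneousComponent_ne [CommSemiring K] {A : Type*} [CommSemiring A]
    [Algebra K A] {x y : σ → A} {f : MvPolynomial σ K} (h : aeval x f ≠ aeval y f) :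
    ∃ d ≤ f.totalDegree,
      aeval x (homogeneousComponent d f) ≠ aeval y (homogeneousComponent d f) := by
  contrapose! h
  rw [← sum_homogeneousComponent f, map_sum, map_sum]
  exact Finset.sum_congr rfl fun d hd ↦ h d (Finset.mem_range_succ_iff.mp hd)

end PolynomialEvaluation

section BlockMatrices

variable {ι R : Type*} [DecidableEq ι] {m n : ι → Type*}

/-- The block matrix whose only nonzero block is `M`, in block row `i` and block column `j`. -/
def blockSingle [Zero R] (i j : ι) (M : Matrix (m i) (n j) R) :
    Matrix (Σ i, m i) (Σ j, n j) R :=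
  Matrix.of fun p q ↦
    (Pi.single i (Pi.single j M) : (k l : ι) → Matrix (m k) (n l) R) p.1 q.1 p.2 q.2

theorem blockSingle_apply_eq [Zero R] (i j : ι) (M : Matrix (m i) (n j) R) (a : m i) (b : n j) :
    blockSingle i j M ⟨i, a⟩ ⟨j, b⟩ = M a b := by
  simp [blockSingle]

theorem blockSingle_apply_of_ne_left [Zero R] {i k : ι} (h : k ≠ i) (j : ι)
    (M : Matrix (m i) (n j) R) (a : m k) (q : Σ j, n j) : blockSingle i j M ⟨k, a⟩ q = 0 := by
  simp [blockSingle, h]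

theorem blockSingle_apply_of_ne_right [Zero R] {j l : ι} (h : l ≠ j) (i : ι)
    (M : Matrix (m i) (n j) R) (p : Σ i, m i) (b : n l) : blockSingle i j M p ⟨l, b⟩ = 0 := by
  obtain ⟨k, a⟩ := p
  rcases eq_or_ne k i with rfl | hk
  · simp [blockSingle, h]
  · exact blockSingle_apply_of_ne_left hk j M a _

theorem blockSingle_injective [Zero R] (i j : ι) :
    Function.Injective (blockSingle i j : Matrix (m i) (n j) R → _) := fun M N h ↦ by
  ext a b
  rw [← blockSingle_apply_eq i j M, h, blockSingle_apply_eq]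

theorem blockSingle_apply_mem [Zero R] {s : Set R} (h0 : 0 ∈ s) {i j : ι}
    {M : Matrix (m i) (n j) R} (hM : ∀ a b, M a b ∈ s) (p : Σ i, m i) (q : Σ j, n j) :
    blockSingle i j M p q ∈ s := by
  obtain ⟨⟨k, a⟩, ⟨l, b⟩⟩ := p, q
  rcases eq_or_ne k i with rfl | hk
  · rcases eq_or_ne l j with rfl | hl
    · rw [blockSingle_apply_eq]
      exact hM a b
    · rwa [blockSingle_apply_of_ne_right hl]
  · rwa [blockSingle_apply_of_ne_left hk]

theorem map_blockSingle [Zero R] {S : Type*} [Zero S] (f : R → S) (hf : f 0 = 0) (i j : ι)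
    (M : Matrix (m i) (n j) R) : (blockSingle i j M).map f = blockSingle i j (M.map f) := by
  ext ⟨k, a⟩ ⟨l, b⟩
  rcases eq_or_ne k i with rfl | hk
  · rcases eq_or_ne l j with rfl | hl
    · simp only [Matrix.map_apply, blockSingle_apply_eq]
    · simp only [Matrix.map_apply, blockSingle_apply_of_ne_right hl, hf]
  · simp only [Matrix.map_apply, blockSingle_apply_of_ne_left hk, hf]

theorem blockSingle_add [AddZeroClass R] (i j : ι) (M N : Matrix (m i) (n j) R) :
    blockSingle i j (M + N) = blockSingle i j M + blockSingle i j N := by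
  ext p q
  simp [blockSingle, Pi.single_add]

theorem blockDiagonal'_mul_blockSingle [Fintype ι] [∀ i, Fintype (m i)]
    [NonUnitalNonAssocSemiring R] (A : ∀ i, Matrix (m i) (m i) R) (i j : ι)
    (M : Matrix (m i) (n j) R) :
    blockDiagonal' A * blockSingle i j M = blockSingle i j (A i * M) := by
  ext ⟨k, a⟩ ⟨l, b⟩
  have sum_eq : (blockDiagonal' A * blockSingle i j M) ⟨k, a⟩ ⟨l, b⟩
      = ∑ c, A k a c * blockSingle i j M ⟨k, c⟩ ⟨l, b⟩ := by
    rw [Matrix.mul_apply, Fintype.sum_sigma, Fintype.sum_eq_single k fun k' hk' ↦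
      Finset.sum_eq_zero fun c _ ↦ by rw [blockDiagonal'_apply_ne _ _ _ hk'.symm, zero_mul]]
    simp only [blockDiagonal'_apply_eq]
  rw [sum_eq]
  rcases eq_or_ne k i with rfl | hk
  · rcases eq_or_ne l j with rfl | hl
    · simp only [blockSingle_apply_eq, Matrix.mul_apply]
    · simp only [blockSingle_apply_of_ne_right hl, mul_zero, Finset.sum_const_zero]
  · simp only [blockSingle_apply_of_ne_left hk, mul_zero, Finset.sum_const_zero]

theorem blockSingle_mul_blockDiagonal' [Fintype ι] [∀ i, Fintype (n i)]
    [NonUnitalNonAssocSemiring R] (B : ∀ i, Matrix (n i) (n i) R) (i j : ι)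
    (M : Matrix (m i) (n j) R) :
    blockSingle i j M * blockDiagonal' B = blockSingle i j (M * B j) := by
  ext ⟨k, a⟩ ⟨l, b⟩
  have sum_eq : (blockSingle i j M * blockDiagonal' B) ⟨k, a⟩ ⟨l, b⟩
      = ∑ c, blockSingle i j M ⟨k, a⟩ ⟨l, c⟩ * B l c b := by
    rw [Matrix.mul_apply, Fintype.sum_sigma, Fintype.sum_eq_single l fun l' hl' ↦
      Finset.sum_eq_zero fun c _ ↦ by rw [blockDiagonal'_apply_ne _ _ _ hl', mul_zero]]
    simp only [blockDiagonal'_apply_eq]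
  rw [sum_eq]
  rcases eq_or_ne k i with rfl | hk
  · rcases eq_or_ne l j with rfl | hl
    · simp only [blockSingle_apply_eq, Matrix.mul_apply]
    · simp only [blockSingle_apply_of_ne_right hl, zero_mul, Finset.sum_const_zero]
  · simp only [blockSingle_apply_of_ne_left hk, zero_mul, Finset.sum_const_zero]

section BlockIdempotents

variable [∀ i, DecidableEq (m i)]

theorem blockSingle_one_eq_diagonal [Zero R] [One R] (i : ι) :
    (blockSingle i i 1 : Matrix (Σ i, m i) (Σ i, m i) R)
      = diagonal fun p ↦ if p.1 = i then 1 else 0 := by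
  ext ⟨k, a⟩ ⟨l, b⟩
  rcases eq_or_ne k i with rfl | hk
  · rcases eq_or_ne l k with rfl | hl
    · simp [blockSingle_apply_eq, diagonal_apply, one_apply]
    · simp [blockSingle_apply_of_ne_right hl, hl.symm]
  · simp [blockSingle_apply_of_ne_left hk, diagonal_apply, hk]

theorem blockSingle_one_mul_self [NonAssocSemiring R] [Fintype ι] [∀ i, Fintype (m i)] (i : ι) :
    (blockSingle i i 1 * blockSingle i i 1 : Matrix (Σ i, m i) (Σ i, m i) R)
      = blockSingle i i 1 := by
  simp +contextual [blockSingle_one_eq_diagonal]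

theorem sum_blockSingle_one [NonAssocSemiring R] [Fintype ι] :
    ∑ i, blockSingle i i 1 = (1 : Matrix (Σ i, m i) (Σ i, m i) R) := by
  ext p q
  simp [blockSingle_one_eq_diagonal, Matrix.sum_apply, diagonal_apply, one_apply]

variable [Fintype ι] [∀ i, Fintype (m i)]

theorem blockDiagonal'_blockDiag'_eq_sum [NonAssocSemiring R]
    (P : Matrix (Σ i, m i) (Σ i, m i) R) :
    blockDiagonal' (blockDiag' P) = ∑ i, blockSingle i i 1 * P * blockSingle i i 1 := by
  ext ⟨k, a⟩ ⟨l, b⟩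
  simp only [blockSingle_one_eq_diagonal, Matrix.sum_apply, mul_diagonal, diagonal_mul,
    ite_mul, mul_ite, one_mul, mul_one, zero_mul, mul_zero, Finset.sum_ite_eq, Finset.mem_univ,
    if_true]
  rcases eq_or_ne k l with rfl | hkl
  · simp only [blockDiagonal'_apply_eq, blockDiag'_apply, if_true]
  · rw [blockDiagonal'_apply_ne _ _ _ hkl, if_neg hkl]

theorem blockDiagonal'_blockDiag'_eq_self [NonAssocSemiring R]
    {P : Matrix (Σ i, m i) (Σ i, m i) R}
    (h : ∀ i, P * blockSingle i i 1 = blockSingle i i 1 * P) :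
    blockDiagonal' (blockDiag' P) = P := by
  ext ⟨k, a⟩ ⟨l, b⟩
  rcases eq_or_ne k l with rfl | hkl
  · rw [blockDiagonal'_apply_eq, blockDiag'_apply]
  · have := congr($(h l) ⟨k, a⟩ ⟨l, b⟩)
    simp only [blockSingle_one_eq_diagonal, mul_diagonal, diagonal_mul, if_true, mul_one,
      if_neg hkl, zero_mul] at this
    rw [blockDiagonal'_apply_ne _ _ _ hkl, this]

theorem isUnit_blockDiag' [Ring R] {P : Matrix (Σ i, m i) (Σ i, m i) R} (hP : IsUnit P)
    (h : ∀ i, Commute P (blockSingle i i 1)) (i : ι) : IsUnit (blockDiag' P i) := by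
  obtain ⟨P, rfl⟩ := hP
  have P_eq := blockDiagonal'_blockDiag'_eq_self h
  have P_inv_eq := blockDiagonal'_blockDiag'_eq_self fun i ↦ (h i).units_inv_left
  have mul_inv : (fun k ↦ blockDiag' P.1 k * blockDiag' P⁻¹.1 k) = 1 :=
    blockDiagonal'_injective <| by
      rw [blockDiagonal'_mul, P_eq, P_inv_eq, P.mul_inv, blockDiagonal'_one]
  have inv_mul : (fun k ↦ blockDiag' P⁻¹.1 k * blockDiag' P.1 k) = 1 :=
    blockDiagonal'_injective <| by
      rw [blockDiagonal'_mul, P_eq, P_inv_eq, P.inv_mul, blockDiagonal'_one]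
  exact ⟨⟨_, _, congrFun mul_inv i, congrFun inv_mul i⟩, rfl⟩

theorem exists_isProj_toLin'_blockDiagonal' {K : Type*} [Field K]
    {W : Submodule K ((Σ i, m i) → K)} (hW : ∀ i, ∀ w ∈ W, blockSingle i i 1 *ᵥ w ∈ W) :
    ∃ π : ∀ i, Matrix (m i) (m i) K, LinearMap.IsProj W (toLin' (blockDiagonal' π)) := by
  obtain ⟨f, hf⟩ := W.subtype.exists_leftInverse_of_injective W.ker_subtype
  have f_apply (w : W) : f w = w := congr($hf w)
  let P := LinearMap.toMatrix' (W.subtype ∘ₗ f)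
  have P_mulVec (x) : P *ᵥ x = f x := by simp [P]
  have apply_eq (x) : toLin' (blockDiagonal' (blockDiag' P)) x
      = ∑ i, blockSingle i i 1 *ᵥ (f (blockSingle i i 1 *ᵥ x) : (Σ i, m i) → K) := by
    rw [toLin'_apply, blockDiagonal'_blockDiag'_eq_sum, sum_mulVec]
    simp only [← mulVec_mulVec, P_mulVec]
  refine ⟨blockDiag' P, ⟨fun x ↦ ?_, fun w hw ↦ ?_⟩⟩
  · rw [apply_eq]
    exact W.sum_mem fun i _ ↦ hW i _ (f _).2
  · rw [apply_eq]
    have f_single_mulVec (i : ι) :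
        (f (blockSingle i i 1 *ᵥ w) : (Σ i, m i) → K) = blockSingle i i 1 *ᵥ w :=
      congr(($(f_apply ⟨_, hW i w hw⟩) : (Σ i, m i) → K))
    simp only [f_single_mulVec, mulVec_mulVec, blockSingle_one_mul_self]
    rw [← sum_mulVec, sum_blockSingle_one, one_mulVec]

end BlockIdempotents

end BlockMatrices

section Degeneration

theorem isUnit_smul_add_one_sub {K A : Type*} [Field K] [Ring A] [Algebra K A] {p : A}
    (hp : IsIdempotentElem p) {t : K} (ht : t ≠ 0) : IsUnit (t • p + (1 - p)) := by
  have mul_eq_one {s t : K} (hts : t * s = 1) :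
      (s • p + (1 - p)) * (t • p + (1 - p)) = 1 := by
    simp only [add_mul, mul_add, smul_mul_assoc, mul_smul_comm, smul_smul, hts, hp.eq,
      hp.mul_one_sub_self, hp.one_sub_mul_self, hp.one_sub.eq, one_smul, smul_zero, add_zero,
      zero_add, add_sub_cancel]
  exact ⟨⟨_, _, mul_eq_one (inv_mul_cancel₀ ht), mul_eq_one (mul_inv_cancel₀ ht)⟩, rfl⟩

theorem nonempty_linearEquiv_prod_quotient {K Z M N : Type*} [CommRing K]
    [AddCommGroup M] [Module K M] [Module (FreeAlgebra K Z) M]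
    [IsScalarTower K (FreeAlgebra K Z) M]
    [AddCommGroup N] [Module K N] [Module (FreeAlgebra K Z) N]
    [IsScalarTower K (FreeAlgebra K Z) N] (e : N ≃ₗ[K] M) {U : Submodule (FreeAlgebra K Z) M}
    {p : Module.End K M} (hp : LinearMap.IsProj (U.restrictScalars K) p)
    (h : ∀ (z : Z) (y : N), e (FreeAlgebra.ι K z • y) = p (FreeAlgebra.ι K z • p (e y)) +
      (1 - p) (FreeAlgebra.ι K z • (1 - p) (e y))) :
    Nonempty (N ≃ₗ[FreeAlgebra K Z] U × (M ⧸ U)) := by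
  have p_p (x : M) : p (p x) = p x := hp.map_id _ (hp.map_mem x)
  have mkQ_p (x : M) : U.mkQ (p x) = 0 := (Submodule.Quotient.mk_eq_zero U).mpr (hp.map_mem x)
  let φ : M →ₗ[K] U × (M ⧸ U) := LinearMap.prod hp.codRestrict (U.mkQ.restrictScalars K)
  have φ_injective : Function.Injective φ := by
    refine (injective_iff_map_eq_zero φ).mpr fun x hx ↦ ?_
    obtain ⟨hx_fst, hx_snd⟩ := Prod.ext_iff.mp hx
    rw [← hp.map_id x ((Submodule.Quotient.mk_eq_zero U).mp hx_snd)]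
    exact congrArg Subtype.val hx_fst
  have φ_surjective : Function.Surjective φ := by
    rintro ⟨u, q⟩
    obtain ⟨x, rfl⟩ := U.mkQ_surjective q
    refine ⟨u + (x - p x), Prod.ext (Subtype.ext ?_) ?_⟩
    · change p (u + (x - p x)) = u
      rw [map_add, map_sub, p_p, sub_self, add_zero, hp.map_id _ u.2]
    · change U.mkQ (u + (x - p x)) = U.mkQ x
      rw [map_add, map_sub, mkQ_p, sub_zero, show U.mkQ u = 0 by simp, zero_add]
  let ψ : N ≃ₗ[K] U × (M ⧸ U) := e ≪≫ₗ LinearEquiv.ofBijective φ ⟨φ_injective, φ_surjective⟩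
  have ψ_ι_smul (z : Z) (y : N) : ψ (FreeAlgebra.ι K z • y) = FreeAlgebra.ι K z • ψ y := by
    refine Prod.ext (Subtype.ext ?_) ?_
    · change p (e (FreeAlgebra.ι K z • y)) = FreeAlgebra.ι K z • p (e y)
      rw [h, LinearMap.sub_apply, Module.End.one_apply, map_add, map_sub, p_p, p_p, sub_self,
        add_zero]
      exact hp.map_id _ (U.smul_mem _ (hp.map_mem _))
    · change U.mkQ (e (FreeAlgebra.ι K z • y)) = FreeAlgebra.ι K z • U.mkQ (e y)
      rw [h, map_add, mkQ_p, zero_add, LinearMap.sub_apply, map_sub, mkQ_p, sub_zero,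
        Module.End.one_apply, map_smul, LinearMap.sub_apply, map_sub, mkQ_p, sub_zero,
        Module.End.one_apply]
  exact ⟨{ ψ with map_smul' := map_freeAlgebra_smul ψ.toLinearMap ψ_ι_smul }⟩

theorem exists_isSemisimpleModule_finrank_lt {K F M M' : Type*} [Field K] [Ring F] [Algebra K F]
    [AddCommGroup M] [Module K M] [Module F M] [IsScalarTower K F M] [FiniteDimensional K M]
    [AddCommGroup M'] [Module K M'] [Module F M'] [IsScalarTower K F M'] {U : Submodule F M}
    [IsSemisimpleModule F U] (hU : U ≠ ⊤) (e : M' ≃ₗ[F] U × (M ⧸ U)) :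
    ∃ U' : Submodule F M', IsSemisimpleModule F U' ∧
      Module.finrank K U < Module.finrank K U' := by
  have : IsArtinian F (M ⧸ U) := isArtinian_of_tower K inferInstance
  have : Nontrivial (M ⧸ U) := Submodule.Quotient.nontrivial_iff.mpr hU
  obtain ⟨T, hT, -⟩ := (eq_bot_or_exists_atom_le (⊤ : Submodule F (M ⧸ U))).resolve_left top_ne_bot
  have : IsSimpleModule F T := isSimpleModule_iff_isAtom.mpr hT
  have : Nontrivial T := IsSimpleModule.nontrivial F T
  have : IsSemisimpleModule F (U × T) := isSemisimpleModule_prod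
  let g : U × T →ₗ[F] M' := e.symm.toLinearMap ∘ₗ LinearMap.prodMap LinearMap.id T.subtype
  have g_injective : Function.Injective g :=
    e.symm.injective.comp (Function.injective_id.prodMap T.subtype_injective)
  refine ⟨LinearMap.range g, IsSemisimpleModule.range g, ?_⟩
  rw [← ((LinearEquiv.ofInjective g g_injective).restrictScalars K).finrank_eq,
    Module.finrank_prod]
  exact Nat.lt_add_of_pos_right Module.finrank_pos

end Degeneration

section MatrixModule

variable {K F n : Type*} [CommRing K] [Ring F] [Algebra K F] [Fintype n] [DecidableEq n]

/-- The module `n → K` on which the algebra `F` acts through a matrix representation `ρ`. -/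
def MatrixModule (_ρ : F →ₐ[K] Matrix n n K) : Type _ := n → K

namespace MatrixModule

variable (ρ : F →ₐ[K] Matrix n n K)

instance : AddCommGroup (MatrixModule ρ) := inferInstanceAs (AddCommGroup (n → K))

instance : Module K (MatrixModule ρ) := inferInstanceAs (Module K (n → K))

instance : Module F (MatrixModule ρ) :=
  Module.compHom (n → K) ((toLinAlgEquiv' : Matrix n n K ≃ₐ[K] _).toAlgHom.comp ρ).toRingHom

instance : Module.Free K (MatrixModule ρ) := inferInstanceAs (Module.Free K (n → K))

instance : Module.Finite K (MatrixModule ρ) := inferInstanceAs (Module.Finite K (n → K))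

/-- The underlying vector of an element of a matrix module. -/
def toVec : MatrixModule ρ ≃ₗ[K] (n → K) := LinearEquiv.refl K _

theorem toVec_smul (x : F) (y : MatrixModule ρ) : toVec ρ (x • y) = ρ x *ᵥ toVec ρ y := rfl

instance : IsScalarTower K F (MatrixModule ρ) where
  smul_assoc c x y := (toVec ρ).injective <| by
    rw [toVec_smul, (toVec ρ).map_smul, toVec_smul, map_smul, smul_mulVec]

theorem finrank_eq [Nontrivial K] : Module.finrank K (MatrixModule ρ) = Fintype.card n :=
  Module.finrank_fintype_fun_eq_card K

theorem charpoly_lsmul [Nontrivial K] (x : F) :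
    (Algebra.lsmul K K (MatrixModule ρ) x).charpoly = (ρ x).charpoly := by
  rw [← charpoly_toLin']
  rfl

end MatrixModule

end MatrixModule

section QuiverRepresentations

variable {K R Q0 Q1 : Type} {ta ha : Q1 → Q0} {α : Q0 → ℕ}

/-- The space `Rep(Q, α)` of representations over `R` of the quiver with arrows `Q1` and tail and
head maps `ta` and `ha`. -/
abbrev QuiverRep (R : Type) {Q0 Q1 : Type} (ta ha : Q1 → Q0) (α : Q0 → ℕ) : Type :=
  (a : Q1) → Matrix (Fin (α (ha a))) (Fin (α (ta a))) R

section GeneratorMatrices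

variable [DecidableEq Q0]

/-- The matrices on the total space by which the vertices and the arrows of a quiver act in the
representation `v`: a vertex acts as the projection to its summand, an arrow as its block. -/
def quiverGen [Zero R] [One R] (v : QuiverRep R ta ha α) :
    Q0 ⊕ Q1 → Matrix (Σ i, Fin (α i)) (Σ i, Fin (α i)) R
  | .inl i => blockSingle i i 1
  | .inr a => blockSingle (ha a) (ta a) (v a)

theorem map_quiverGen [NonAssocSemiring R] {S : Type} [NonAssocSemiring S] (f : R →+* S)
    (v : QuiverRep R ta ha α) (z : Q0 ⊕ Q1) :
    (quiverGen v z).map f = quiverGen (fun a ↦ (v a).map f) z := by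
  rcases z with i | a
  · rw [quiverGen, map_blockSingle f (map_zero f),
      Matrix.map_one f (map_zero f) (map_one f), quiverGen]
  · exact map_blockSingle f (map_zero f) _ _ _

theorem quiverGen_apply_mem [Zero R] [One R] {s : Set R} (h0 : 0 ∈ s) (h1 : 1 ∈ s)
    {v : QuiverRep R ta ha α} (hv : ∀ a i j, v a i j ∈ s) (z : Q0 ⊕ Q1) (p q : Σ i, Fin (α i)) :
    quiverGen v z p q ∈ s := by
  rcases z with i | a
  · refine blockSingle_apply_mem h0 (fun a b ↦ ?_) p q
    rw [one_apply]
    split_ifs <;> assumption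
  · exact blockSingle_apply_mem (m := fun i ↦ Fin (α i)) (n := fun i ↦ Fin (α i)) h0 (hv a) p q

theorem blockDiagonal'_mul_quiverGen [Semiring R] [Fintype Q0] {v w : QuiverRep R ta ha α}
    {A : ∀ i, Matrix (Fin (α i)) (Fin (α i)) R} (h : ∀ a, A (ha a) * v a = w a * A (ta a))
    (z : Q0 ⊕ Q1) : blockDiagonal' A * quiverGen v z = quiverGen w z * blockDiagonal' A := by
  rcases z with i | a
  · simp only [quiverGen, blockDiagonal'_mul_blockSingle, blockSingle_mul_blockDiagonal', mul_one,
      one_mul]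
  · simp only [quiverGen, blockDiagonal'_mul_blockSingle, blockSingle_mul_blockDiagonal', h a]

variable [Fintype Q0] [CommRing K]

variable (K) in
/-- The path algebra action on the total space of `v`, pulled back to the free algebra on the
vertices and the arrows. -/
def quiverHom [CommRing R] [Algebra K R] (v : QuiverRep R ta ha α) :
    FreeAlgebra K (Q0 ⊕ Q1) →ₐ[K] Matrix (Σ i, Fin (α i)) (Σ i, Fin (α i)) R :=
  FreeAlgebra.lift K (quiverGen v)

theorem quiverHom_ι [CommRing R] [Algebra K R] (v : QuiverRep R ta ha α) (z : Q0 ⊕ Q1) :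
    quiverHom K v (FreeAlgebra.ι K z) = quiverGen v z :=
  FreeAlgebra.lift_ι_apply _ _

theorem map_quiverHom [CommRing R] [Algebra K R] {S : Type} [CommRing S] [Algebra K S]
    (f : R →ₐ[K] S) (v : QuiverRep R ta ha α) (x : FreeAlgebra K (Q0 ⊕ Q1)) :
    (quiverHom K v x).map f = quiverHom K (fun a ↦ (v a).map f) x := by
  have : f.mapMatrix.comp (quiverHom K v) = quiverHom K (fun a ↦ (v a).map f) := by
    refine FreeAlgebra.hom_ext (funext fun z ↦ ?_)
    simp only [Function.comp_apply, AlgHom.comp_apply, AlgHom.mapMatrix_apply, quiverHom_ι]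
    exact map_quiverGen (f : R →+* S) v z
  exact congr($this x)

theorem det_quiverHom_eq_of_isUnit {v w : QuiverRep K ta ha α}
    {A : ∀ i, Matrix (Fin (α i)) (Fin (α i)) K} (hA : ∀ i, IsUnit (A i))
    (h : ∀ a, A (ha a) * v a = w a * A (ta a)) (x : FreeAlgebra K (Q0 ⊕ Q1)) :
    (quiverHom K v x).det = (quiverHom K w x).det := by
  have isUnit_det : IsUnit (blockDiagonal' A).det :=
    (isUnit_iff_isUnit_det _).mp ((Pi.isUnit_iff.mpr hA).map (blockDiagonal'RingHom _ K))
  have hdet := congr(Matrix.det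
    $(mul_freeAlgebra_lift_eq_lift_mul (blockDiagonal'_mul_quiverGen h) x))
  rw [det_mul, det_mul, mul_comm] at hdet
  exact isUnit_det.mul_right_cancel hdet

end GeneratorMatrices

section Invariants

variable [Field K]

theorem mem_quiverInvariants_iff
    {f : MvPolynomial ((a : Q1) × (Fin (α (ha a)) × Fin (α (ta a)))) K} :
    f ∈ quiverInvariants K ta ha α ↔
      ∀ (A : (i : Q0) → GeneralLinearGroup (Fin (α i)) K) (v : QuiverRep K ta ha α),
        aeval (repCoords fun a ↦ (A (ha a)).val * v a * ((A (ta a))⁻¹).val) f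
          = aeval (repCoords v) f := by
  simp only [quiverInvariants, Algebra.mem_iInf, AlgHom.mem_equalizer]

theorem homogeneousComponent_mem_quiverInvariants [Infinite K]
    {f : MvPolynomial ((a : Q1) × (Fin (α (ha a)) × Fin (α (ta a)))) K}
    (hf : f ∈ quiverInvariants K ta ha α) (d : ℕ) :
    homogeneousComponent d f ∈ quiverInvariants K ta ha α := by
  refine mem_quiverInvariants_iff.mpr fun A v ↦
    aeval_homogeneousComponent_eq_of_forall_aeval_smul_eq (fun t ↦ ?_) d
  have conj_smul : (fun a ↦ (A (ha a)).val * (t • v) a * ((A (ta a))⁻¹).val)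
      = t • fun a ↦ (A (ha a)).val * v a * ((A (ta a))⁻¹).val := by
    funext a
    simp only [Pi.smul_apply, Matrix.mul_smul, Matrix.smul_mul]
  have := mem_quiverInvariants_iff.mp hf A (t • v)
  rwa [conj_smul] at this

/-- The representation in general position, with the coordinate functions of `Rep(Q, α)` as
matrix entries. -/
noncomputable def genericRep (K : Type) [Field K] (ta ha : Q1 → Q0) (α : Q0 → ℕ) :
    QuiverRep (MvPolynomial ((a : Q1) × (Fin (α (ha a)) × Fin (α (ta a)))) K) ta ha α :=
  fun a ↦ Matrix.of fun i j ↦ X ⟨a, i, j⟩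

theorem map_aeval_genericRep (v : QuiverRep K ta ha α) (a : Q1) :
    (genericRep K ta ha α a).map (aeval (repCoords v)) = v a := by
  ext i j
  simp [genericRep, repCoords]

section Determinants

variable [DecidableEq Q0] [Fintype Q0]

theorem aeval_det_quiverHom_genericRep (v : QuiverRep K ta ha α) (x : FreeAlgebra K (Q0 ⊕ Q1)) :
    aeval (repCoords v) (quiverHom K (genericRep K ta ha α) x).det = (quiverHom K v x).det := by
  rw [AlgHom.map_det, AlgHom.mapMatrix_apply, map_quiverHom]
  simp only [map_aeval_genericRep]

theorem det_quiverHom_genericRep_mem_quiverInvariants (x : FreeAlgebra K (Q0 ⊕ Q1)) :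
    (quiverHom K (genericRep K ta ha α) x).det ∈ quiverInvariants K ta ha α := by
  refine mem_quiverInvariants_iff.mpr fun A v ↦ ?_
  rw [aeval_det_quiverHom_genericRep, aeval_det_quiverHom_genericRep]
  refine (det_quiverHom_eq_of_isUnit (fun i ↦ (A i).isUnit) (fun a ↦ ?_) x).symm
  rw [Matrix.mul_assoc, Units.inv_mul, Matrix.mul_one]

theorem totalDegree_det_quiverHom_genericRep_le {k : ℕ} {x : FreeAlgebra K (Q0 ⊕ Q1)}
    (hx : x ∈ freeAlgebraShortWords K (Q0 ⊕ Q1) ^ k) :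
    (quiverHom K (genericRep K ta ha α) x).det.totalDegree ≤ (∑ i, α i) * k := by
  have totalDegree_quiverGen_le (z : Q0 ⊕ Q1) (p q : Σ i, Fin (α i)) :
      (quiverGen (genericRep K ta ha α) z p q).totalDegree ≤ 1 :=
    quiverGen_apply_mem (s := {f | totalDegree f ≤ 1}) (by simp) (by simp)
      (fun a i j ↦ (totalDegree_X _).le) z p q
  refine (totalDegree_det_le
    (totalDegree_freeAlgebra_lift_apply_le totalDegree_quiverGen_le hx)).trans_eq ?_
  simp only [Fintype.card_sigma, Fintype.card_fin]

end Determinants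

/-- Two representations on which all invariants of the quiver agree: exactly the pairs that a
separating set need not tell apart. -/
def InvariantEquiv (v w : QuiverRep K ta ha α) : Prop :=
  ∀ f ∈ quiverInvariants K ta ha α, aeval (repCoords v) f = aeval (repCoords w) f

theorem InvariantEquiv.symm {v w : QuiverRep K ta ha α} (h : InvariantEquiv v w) :
    InvariantEquiv w v := fun f hf ↦ (h f hf).symm

theorem InvariantEquiv.trans {u v w : QuiverRep K ta ha α} (h : InvariantEquiv u v)
    (h' : InvariantEquiv v w) : InvariantEquiv u w := fun f hf ↦ (h f hf).trans (h' f hf)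

theorem invariantEquiv_of_isUnit {v w : QuiverRep K ta ha α}
    {A : ∀ i, Matrix (Fin (α i)) (Fin (α i)) K} (hA : ∀ i, IsUnit (A i))
    (h : ∀ a, A (ha a) * v a = w a * A (ta a)) : InvariantEquiv v w := fun f hf ↦ by
  choose B hB using hA
  have conj_eq : (fun a ↦ (B (ha a)).val * v a * ((B (ta a))⁻¹).val) = w := by
    funext a
    rw [hB, h, ← hB, Matrix.mul_assoc, Units.mul_inv, Matrix.mul_one]
  rw [← mem_quiverInvariants_iff.mp hf B v, conj_eq]

end Invariants

section AssociatedGraded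

variable [Field K]

/-- The associated graded representation of the filtration of `v` whose step is the image of the
idempotents `π`, realised on the same spaces through the splitting that `π` provides. -/
def gradedRep (π : ∀ i, Matrix (Fin (α i)) (Fin (α i)) K) (v : QuiverRep K ta ha α) :
    QuiverRep K ta ha α :=
  fun a ↦ π (ha a) * v a * π (ta a) + (1 - π (ha a)) * v a * (1 - π (ta a))

variable {π : ∀ i, Matrix (Fin (α i)) (Fin (α i)) K} {v : QuiverRep K ta ha α}

/- Conjugating `v` by `t • π + (1 - π)` scales by `t` the part of `v` off the associated graded, so
that `gradedRep π v` is the limit at `t = 0` of representations isomorphic to `v`. -/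
theorem invariantEquiv_gradedRep [Infinite K] (hπ : ∀ i, IsIdempotentElem (π i))
    (hv : ∀ a, π (ha a) * v a * π (ta a) = v a * π (ta a)) :
    InvariantEquiv (gradedRep π v) v := fun f hf ↦ by
  let u : QuiverRep K ta ha α := fun a ↦ π (ha a) * v a * (1 - π (ta a))
  refine aeval_eq_of_forall_aeval_add_smul_eq (y := repCoords u) fun t ht ↦ ?_
  have intertwines (a : Q1) : (t • π (ha a) + (1 - π (ha a))) * v a
      = (gradedRep π v + t • u) a * (t • π (ta a) + (1 - π (ta a))) := by
    have hv_mul : v a * π (ta a) * π (ta a) = v a * π (ta a) := by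
      rw [Matrix.mul_assoc, (hπ _).eq]
    simp only [gradedRep, u, Pi.add_apply, Pi.smul_apply, Matrix.add_mul, Matrix.mul_add,
      Matrix.sub_mul, Matrix.mul_sub, Matrix.one_mul, Matrix.mul_one, Matrix.smul_mul,
      Matrix.mul_smul, hv, hv_mul]
    module
  exact (invariantEquiv_of_isUnit (fun i ↦ isUnit_smul_add_one_sub (hπ i) ht) intertwines).symm
    f hf

theorem quiverGen_gradedRep [DecidableEq Q0] [Fintype Q0] (hπ : ∀ i, IsIdempotentElem (π i))
    (z : Q0 ⊕ Q1) :
    quiverGen (gradedRep π v) z = blockDiagonal' π * quiverGen v z * blockDiagonal' π +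
      (1 - blockDiagonal' π) * quiverGen v z * (1 - blockDiagonal' π) := by
  rw [← blockDiagonal'_one, ← blockDiagonal'_sub]
  rcases z with i | a
  · simp only [quiverGen, blockDiagonal'_mul_blockSingle, blockSingle_mul_blockDiagonal',
      Pi.sub_apply, Pi.one_apply, mul_one, (hπ i).eq, (hπ i).one_sub.eq, ← blockSingle_add,
      add_sub_cancel]
  · simp only [quiverGen, blockDiagonal'_mul_blockSingle, blockSingle_mul_blockDiagonal',
      Pi.sub_apply, ← blockSingle_add]
    rfl

end AssociatedGraded

section Separation

variable [Field K] [DecidableEq Q0] [Fintype Q0]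

theorem exists_isIdempotentElem_isProj_of_submodule {v : QuiverRep K ta ha α}
    (U : Submodule (FreeAlgebra K (Q0 ⊕ Q1)) (MatrixModule (quiverHom K v))) :
    ∃ π : ∀ i, Matrix (Fin (α i)) (Fin (α i)) K, (∀ i, IsIdempotentElem (π i)) ∧
      (∀ a, π (ha a) * v a * π (ta a) = v a * π (ta a)) ∧
      LinearMap.IsProj (U.restrictScalars K)
        ((MatrixModule.toVec (quiverHom K v)).symm.conj (toLin' (blockDiagonal' π))) := by
  let toVec := MatrixModule.toVec (quiverHom K v)
  let W : Submodule K ((Σ i, Fin (α i)) → K) := (U.restrictScalars K).map toVec.toLinearMap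
  have gen_mulVec_mem (z : Q0 ⊕ Q1) : ∀ x ∈ W, quiverGen v z *ᵥ x ∈ W := by
    rintro _ ⟨y, hy, rfl⟩
    refine ⟨FreeAlgebra.ι K z • y, U.smul_mem _ hy, ?_⟩
    rw [← quiverHom_ι (K := K)]
    rfl
  obtain ⟨π, hπ⟩ := exists_isProj_toLin'_blockDiagonal' fun i ↦ gen_mulVec_mem (.inl i)
  refine ⟨π, fun i ↦ ?_, fun a ↦ ?_, ⟨fun y ↦ ?_, fun y hy ↦ ?_⟩⟩
  · have blockDiagonal'_mul_self : toLin' (blockDiagonal' π * blockDiagonal' π)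
        = toLin' (blockDiagonal' π) := by
      rw [toLin'_mul]
      exact hπ.isIdempotentElem
    rw [← blockDiagonal'_mul] at blockDiagonal'_mul_self
    exact congrFun (blockDiagonal'_injective (toLin'.injective blockDiagonal'_mul_self)) i
  · have stable : toLin' (blockDiagonal' π * (quiverGen v (.inr a) * blockDiagonal' π))
        = toLin' (quiverGen v (.inr a) * blockDiagonal' π) := by
      refine LinearMap.ext fun x ↦ ?_
      rw [toLin'_mul, toLin'_mul]
      exact hπ.map_id _ (gen_mulVec_mem _ _ (hπ.map_mem x))
    simp only [quiverGen, blockSingle_mul_blockDiagonal', blockDiagonal'_mul_blockSingle] at stable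
    rw [Matrix.mul_assoc]
    exact blockSingle_injective (m := fun i ↦ Fin (α i)) (n := fun i ↦ Fin (α i)) _ _
      (toLin'.injective stable)
  · obtain ⟨y', hy', hy'_eq⟩ := hπ.map_mem (toVec y)
    rw [LinearEquiv.conj_apply_apply, LinearEquiv.symm_symm, ← hy'_eq]
    exact hy'
  · rw [LinearEquiv.conj_apply_apply, LinearEquiv.symm_symm]
    exact (congrArg toVec.symm (hπ.map_id _ ⟨y, hy, rfl⟩)).trans (toVec.symm_apply_apply y)

theorem nonempty_linearEquiv_gradedRep {v : QuiverRep K ta ha α}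
    {U : Submodule (FreeAlgebra K (Q0 ⊕ Q1)) (MatrixModule (quiverHom K v))}
    {π : ∀ i, Matrix (Fin (α i)) (Fin (α i)) K} (hπ : ∀ i, IsIdempotentElem (π i))
    (hU : LinearMap.IsProj (U.restrictScalars K)
      ((MatrixModule.toVec (quiverHom K v)).symm.conj (toLin' (blockDiagonal' π)))) :
    Nonempty (MatrixModule (quiverHom K (gradedRep π v)) ≃ₗ[FreeAlgebra K (Q0 ⊕ Q1)]
      U × (MatrixModule (quiverHom K v) ⧸ U)) := by
  refine nonempty_linearEquiv_prod_quotient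
    (MatrixModule.toVec _ ≪≫ₗ (MatrixModule.toVec (quiverHom K v)).symm) hU fun z y ↦ ?_
  refine (MatrixModule.toVec (quiverHom K v)).injective ?_
  simp only [LinearEquiv.trans_apply, LinearEquiv.apply_symm_apply, LinearEquiv.symm_symm,
    LinearEquiv.conj_apply_apply, LinearMap.sub_apply, Module.End.one_apply, map_add, map_sub,
    MatrixModule.toVec_smul, quiverHom_ι, quiverGen_gradedRep hπ, toLin'_apply, add_mulVec,
    sub_mulVec, one_mulVec, ← mulVec_mulVec, mulVec_sub]
  abel

theorem exists_invariantEquiv_finrank_lt [Infinite K] {v : QuiverRep K ta ha α}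
    {U : Submodule (FreeAlgebra K (Q0 ⊕ Q1)) (MatrixModule (quiverHom K v))}
    [IsSemisimpleModule (FreeAlgebra K (Q0 ⊕ Q1)) U] (hU : U ≠ ⊤) :
    ∃ (v' : QuiverRep K ta ha α)
      (U' : Submodule (FreeAlgebra K (Q0 ⊕ Q1)) (MatrixModule (quiverHom K v'))),
      InvariantEquiv v' v ∧ IsSemisimpleModule (FreeAlgebra K (Q0 ⊕ Q1)) U' ∧
        Module.finrank K U < Module.finrank K U' := by
  obtain ⟨π, hπ, hv, hproj⟩ := exists_isIdempotentElem_isProj_of_submodule U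
  obtain ⟨e⟩ := nonempty_linearEquiv_gradedRep hπ hproj
  obtain ⟨U', hU', hlt⟩ := exists_isSemisimpleModule_finrank_lt (K := K) hU e
  exact ⟨gradedRep π v, U', invariantEquiv_gradedRep hπ hv, hU', hlt⟩

theorem exists_invariantEquiv_isSemisimpleModule [Infinite K] (v : QuiverRep K ta ha α) :
    ∃ v' : QuiverRep K ta ha α, InvariantEquiv v' v ∧
      IsSemisimpleModule (FreeAlgebra K (Q0 ⊕ Q1)) (MatrixModule (quiverHom K v')) := by
  by_contra! hcon
  have exists_le_finrank (k : ℕ) : ∃ (u : QuiverRep K ta ha α)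
      (U : Submodule (FreeAlgebra K (Q0 ⊕ Q1)) (MatrixModule (quiverHom K u))),
      InvariantEquiv u v ∧ IsSemisimpleModule (FreeAlgebra K (Q0 ⊕ Q1)) U ∧
        k ≤ Module.finrank K U := by
    induction k with
    | zero => exact ⟨v, ⊥, fun _ _ ↦ rfl,
        .of_sSup_simples_eq_top (Subsingleton.elim _ _), Nat.zero_le _⟩
    | succ k ih =>
      obtain ⟨u, U, huv, hU, hk⟩ := ih
      have U_ne_top : U ≠ ⊤ := by
        rintro rfl
        exact hcon u huv (IsSemisimpleModule.congr Submodule.topEquiv.symm)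
      obtain ⟨u', U', hu', hU', hlt⟩ := exists_invariantEquiv_finrank_lt U_ne_top
      exact ⟨u', U', hu'.trans huv, hU', hk.trans_lt hlt⟩
  obtain ⟨u, U, -, -, hU⟩ := exists_le_finrank (Fintype.card (Σ i, Fin (α i)) + 1)
  have finrank_le := (U.restrictScalars K).finrank_le
  rw [MatrixModule.finrank_eq] at finrank_le
  exact (Nat.lt_of_succ_le hU).not_ge finrank_le

theorem invariantEquiv_of_linearEquiv {v w : QuiverRep K ta ha α}
    (e : MatrixModule (quiverHom K v) ≃ₗ[FreeAlgebra K (Q0 ⊕ Q1)]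
      MatrixModule (quiverHom K w)) : InvariantEquiv v w := by
  let φ : ((Σ i, Fin (α i)) → K) ≃ₗ[K] ((Σ i, Fin (α i)) → K) :=
    (MatrixModule.toVec (quiverHom K v)).symm ≪≫ₗ e.restrictScalars K ≪≫ₗ
      MatrixModule.toVec (quiverHom K w)
  let Φ := LinearMap.toMatrix' φ.toLinearMap
  have intertwines (z : Q0 ⊕ Q1) : Φ * quiverGen v z = quiverGen w z * Φ := by
    refine toLin'.injective (LinearMap.ext fun x ↦ ?_)
    simp only [toLin'_mul, LinearMap.comp_apply, Φ, toLin'_toMatrix']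
    have := e.map_smul (FreeAlgebra.ι K z) ((MatrixModule.toVec (quiverHom K v)).symm x)
    have := congr(MatrixModule.toVec (quiverHom K w) $this)
    rw [MatrixModule.toVec_smul, quiverHom_ι] at this
    rw [← quiverHom_ι (K := K) v]
    exact this
  have isUnit_Φ : IsUnit Φ :=
    (isUnit_iff_isUnit_det Φ).mpr <| by
      rw [LinearMap.det_toMatrix']
      exact φ.isUnit_det'
  refine invariantEquiv_of_isUnit (A := blockDiag' Φ)
    (isUnit_blockDiag' isUnit_Φ fun i ↦ intertwines (.inl i)) fun a ↦ ?_
  have := intertwines (.inr a)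
  rw [← blockDiagonal'_blockDiag'_eq_self fun i ↦ intertwines (.inl i)] at this
  simp only [quiverGen, blockDiagonal'_mul_blockSingle, blockSingle_mul_blockDiagonal'] at this
  exact blockSingle_injective (m := fun i ↦ Fin (α i)) (n := fun i ↦ Fin (α i)) _ _ this

theorem invariantEquiv_of_forall_det_quiverHom_eq [Infinite K] {v w : QuiverRep K ta ha α}
    (h : ∀ x : FreeAlgebra K (Q0 ⊕ Q1), (quiverHom K v x).det = (quiverHom K w x).det) :
    InvariantEquiv v w := by
  obtain ⟨v', hv, hv'⟩ := exists_invariantEquiv_isSemisimpleModule v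
  obtain ⟨w', hw, hw'⟩ := exists_invariantEquiv_isSemisimpleModule w
  have det_eq {u u' : QuiverRep K ta ha α} (hu : InvariantEquiv u' u)
      (x : FreeAlgebra K (Q0 ⊕ Q1)) : (quiverHom K u' x).det = (quiverHom K u x).det := by
    simpa only [aeval_det_quiverHom_genericRep] using
      hu _ (det_quiverHom_genericRep_mem_quiverInvariants x)
  have charpoly_eq (x : FreeAlgebra K (Q0 ⊕ Q1)) :
      (quiverHom K v' x).charpoly = (quiverHom K w' x).charpoly := by
    refine Polynomial.funext fun t ↦ ?_
    have := h (algebraMap K _ t - x)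
    rw [← det_eq hv, ← det_eq hw, map_sub, map_sub] at this
    rw [eval_charpoly, eval_charpoly]
    simp only [AlgHom.commutes] at this
    exact this
  obtain ⟨e⟩ : Nonempty (MatrixModule (quiverHom K v') ≃ₗ[FreeAlgebra K (Q0 ⊕ Q1)]
      MatrixModule (quiverHom K w')) :=
    nonempty_linearEquiv_of_charpoly_lsmul_eq (K := K) fun x ↦ by
      rw [MatrixModule.charpoly_lsmul, MatrixModule.charpoly_lsmul, charpoly_eq]
  exact (hv.symm.trans (invariantEquiv_of_linearEquiv e)).trans hw

theorem exists_det_quiverHom_ne [Infinite K] {v w : QuiverRep K ta ha α}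
    (h : ¬ InvariantEquiv v w) :
    ∃ x ∈ freeAlgebraShortWords K (Q0 ⊕ Q1) ^ (2 * (∑ i, α i) ^ 2 - 1),
      (quiverHom K v x).det ≠ (quiverHom K w x).det := by
  contrapose! h
  refine invariantEquiv_of_forall_det_quiverHom_eq fun x ↦ ?_
  obtain ⟨y, hy, hyx⟩ := exists_mem_freeAlgebraShortWords_pow_finrank_sub_one
    ((quiverHom K v).prod (quiverHom K w)) x
  have finrank_eq : Module.finrank K (Matrix (Σ i, Fin (α i)) (Σ i, Fin (α i)) K ×
      Matrix (Σ i, Fin (α i)) (Σ i, Fin (α i)) K) = 2 * (∑ i, α i) ^ 2 := by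
    simp only [Module.finrank_prod, Module.finrank_matrix, Module.finrank_self,
      Fintype.card_sigma, Fintype.card_fin]
    ring
  rw [finrank_eq] at hy
  obtain ⟨hv, hw⟩ : quiverHom K v y = quiverHom K v x ∧ quiverHom K w y = quiverHom K w x :=
    Prod.ext_iff.mp hyx
  rw [← hv, ← hw, h y hy]

end Separation

end QuiverRepresentations

theorem mul_two_mul_sq_sub_one_le_pow_six (n : ℕ) : n * (2 * n ^ 2 - 1) ≤ n ^ 6 := by
  rcases lt_or_ge 1 n with hn | hn
  · have two_le : 2 ≤ n ^ 3 := hn.trans_le (Nat.le_self_pow three_ne_zero n)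
    calc n * (2 * n ^ 2 - 1) ≤ n * (2 * n ^ 2) := Nat.mul_le_mul_left n (Nat.sub_le _ _)
      _ = 2 * n ^ 3 := by ring
      _ ≤ n ^ 3 * n ^ 3 := Nat.mul_le_mul_right _ two_le
      _ = n ^ 6 := by ring
  · interval_cases n <;> decide

theorem stmt_9_general (K : Type) [Field K] [Infinite K] {Q0 Q1 : Type} [Fintype Q0]
    (ta ha : Q1 → Q0) (α : Q0 → ℕ) (N : ℕ) (hN : N = ∑ i, α i)
    (v w : (a : Q1) → Matrix (Fin (α (ha a))) (Fin (α (ta a))) K)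
    (hvw : ∃ f ∈ quiverInvariants K ta ha α, aeval (repCoords v) f ≠ aeval (repCoords w) f) :
    ∃ g ∈ quiverInvariants K ta ha α, (∃ d ≤ N * (2 * N ^ 2 - 1), g.IsHomogeneous d) ∧
      aeval (repCoords v) g ≠ aeval (repCoords w) g := by
  classical
  obtain ⟨f, hf, hne⟩ := hvw
  obtain ⟨x, hx, hdet⟩ := exists_det_quiverHom_ne fun h : InvariantEquiv v w ↦ hne (h f hf)
  rw [← aeval_det_quiverHom_genericRep, ← aeval_det_quiverHom_genericRep] at hdet
  obtain ⟨d, hd, hd_ne⟩ := exists_aeval_homogeneousComponent_ne hdet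
  subst hN
  exact ⟨_, homogeneousComponent_mem_quiverInvariants
      (det_quiverHom_genericRep_mem_quiverInvariants x) d,
    ⟨d, hd.trans (totalDegree_det_quiverHom_genericRep_le hx),
      homogeneousComponent_isHomogeneous d _⟩, hd_ne⟩

/-- The homogeneous elements of degree `≤ N^6` in `I(Q,α)`, where
`N = ∑ i, α i`, form a separating subset of `I(Q,α)`. -/
theorem stmt_9 (K : Type) [Field K] [IsAlgClosed K] {Q0 Q1 : Type} [Fintype Q0] [Fintype Q1]
    (ta ha : Q1 → Q0) (α : Q0 → ℕ) (N : ℕ) (hN : N = ∑ i, α i)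
    (v w : (a : Q1) → Matrix (Fin (α (ha a))) (Fin (α (ta a))) K)
    (hvw : ∃ f ∈ quiverInvariants K ta ha α, aeval (repCoords v) f ≠ aeval (repCoords w) f) :
    ∃ g ∈ quiverInvariants K ta ha α, (∃ d ≤ N ^ 6, g.IsHomogeneous d) ∧
      aeval (repCoords v) g ≠ aeval (repCoords w) g := by
  have : Infinite K := IsAlgClosed.instInfinite
  obtain ⟨g, hg, ⟨d, hd, hgd⟩, hne⟩ := stmt_9_general K ta ha α N hN v w hvw
  exact ⟨g, hg, ⟨d, hd.trans (mul_two_mul_sq_sub_one_le_pow_six N), hgd⟩, hne⟩
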